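/- Let μ be a compactly supported Borel probability measure on ℝ, let f : ℝ → ℝ be continuous, and let (K_n)_{n≥0}, (κ̃_n)_{n≥1} be defined from μ and f as in the context. Fix t ≥ 1, let Φ ∈ ℝ^{t×t} be strictly lower triangular, and set E := Σ_{i=1}^{t} κ̃_i·Φ^{i−1} (with Φ^0 := I_t). Then: (a) for every λ ∈ ℝ, the matrix I_t − f(λ)·Φ + E·Φ is lower triangular with unit diagonal, hence invertible, and (I_t − f(λ)·Φ + E·Φ)^{−1}·(f(λ)·I_t − E) = Σ_{i=1}^{t} K_i(λ)·Φ^{i−1}; (b) ∫ K_n(λ) dμ(λ) = 0 for every n ≥ 1, so that ∫ (I_t − f(λ)·Φ + E·Φ)^{−1}·(f(λ)·I_t − E) dμ(λ) = 0 entrywise. -/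

import Mathlib

open MeasureTheory

/-!
Write `e(z) = ∑ κ̃ₙ₊₁ zⁿ` and `s(z) = ∑ Kₙ₊₁ zⁿ` at a fixed `λ`. The recursion says that
`s = (f(λ) - e) (1 + z s)`, i.e. `(1 - (f(λ) - e) z) s = f(λ) - e` as formal power series.
Since `Φ` is nilpotent, substituting `z = Φ` is an algebra homomorphism on power series, and it
turns this identity into the matrix identity to be proved; the power series `1 - (f(λ) - e) z` is a
unit, hence so is its image. The integrals vanish by induction: only the terms `f Kₙ` and
`κ̃ₙ₊₁ K₀` of the recursion for `Kₙ₊₁` contribute, and they cancel by the choice of `κ̃ₙ₊₁`.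
-/

section EvalNilpotent

open Polynomial PowerSeries

variable {R A : Type*} [CommRing R] [Ring A] [Algebra R A] {t : ℕ} {a : A}

theorem aeval_trunc_coe_of_pow_eq_zero (ha : a ^ t = 0) (p : R[X]) :
    aeval a (trunc t (p : R⟦X⟧)) = aeval a p := by
  have hdvd : (X : R[X]) ^ t ∣ p - trunc t (p : R⟦X⟧) := by
    rw [Polynomial.X_pow_dvd_iff]
    intro d hd
    rw [coeff_sub, coeff_trunc, if_pos hd, Polynomial.coeff_coe, sub_self]
  obtain ⟨q, hq⟩ := hdvd
  rw [eq_comm, ← sub_eq_zero, ← map_sub, hq, map_mul, map_pow, aeval_X, ha, zero_mul]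

/-- Evaluation of formal power series at an element `a` with `a ^ t = 0`, as an algebra
homomorphism. It is encoded by evaluating the truncation below degree `t`. -/
noncomputable def evalNilpotent (ha : a ^ t = 0) : R⟦X⟧ →ₐ[R] A :=
  AlgHom.ofLinearMap ((aeval a).toLinearMap ∘ₗ trunc t)
    (by simpa using aeval_trunc_coe_of_pow_eq_zero ha (1 : R[X]))
    (fun p q => by
      simp only [LinearMap.comp_apply, AlgHom.toLinearMap_apply]
      rw [← trunc_trunc_mul_trunc, ← Polynomial.coe_mul, aeval_trunc_coe_of_pow_eq_zero ha,
        map_mul])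

theorem evalNilpotent_X (ha : a ^ t = 0) : evalNilpotent ha (PowerSeries.X : R⟦X⟧) = a := by
  have h := aeval_trunc_coe_of_pow_eq_zero ha (X : R[X])
  rwa [Polynomial.coe_X, aeval_X] at h

theorem evalNilpotent_C (ha : a ^ t = 0) (r : R) :
    evalNilpotent ha (PowerSeries.C r) = r • (1 : A) := by
  rw [← Algebra.algebraMap_eq_smul_one]
  exact (evalNilpotent ha).commutes r

theorem evalNilpotent_mk (ha : a ^ t = 0) (u : ℕ → R) :
    evalNilpotent ha (PowerSeries.mk u) = ∑ i ∈ Finset.range t, u i • a ^ i := by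
  change eval₂ (algebraMap R A) a (trunc t (PowerSeries.mk u)) = _
  simp only [eval₂_trunc_eq_sum_range, coeff_mk, Algebra.smul_def]

end EvalNilpotent

section FreeAppell

variable {R : Type*} [CommRing R]

open Polynomial in
/-- The free Appell polynomials attached to a sequence `κ` of free cumulants, indexed from `1`; the
function `Kₙ` is `freeAppell κ n` evaluated at `f`. -/
noncomputable def freeAppell (κ : ℕ → R) : ℕ → R[X]
  | 0 => 1
  | n + 1 => X * freeAppell κ n - ∑ i : Fin (n + 1), C (κ (i + 1)) * freeAppell κ (n - i)

variable (κ : ℕ → R) (c : R)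

theorem eval_freeAppell_zero : (freeAppell κ 0).eval c = 1 := by
  rw [freeAppell, Polynomial.eval_one]

theorem eval_freeAppell_succ (n : ℕ) :
    (freeAppell κ (n + 1)).eval c = c * (freeAppell κ n).eval c -
      ∑ i ∈ Finset.range (n + 1), κ (i + 1) * (freeAppell κ (n - i)).eval c := by
  rw [freeAppell, ← Fin.sum_univ_eq_sum_range
    (fun i => κ (i + 1) * (freeAppell κ (n - i)).eval c)]
  simp only [Polynomial.eval_sub, Polynomial.eval_mul, Polynomial.eval_X, Polynomial.eval_C,
    Polynomial.eval_finsetSum]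

variable {κ c} in
theorem eq_eval_freeAppell {k : ℕ → R} (hk_zero : k 0 = 1)
    (hk_rec : ∀ n, 1 ≤ n → k n = c * k (n - 1) - ∑ i ∈ Finset.Icc 1 n, κ i * k (n - i)) (n : ℕ) :
    k n = (freeAppell κ n).eval c := by
  induction n using Nat.strong_induction_on with
  | _ n ih =>
    cases n with
    | zero => rw [hk_zero, eval_freeAppell_zero]
    | succ n =>
      rw [hk_rec (n + 1) n.succ_pos, eval_freeAppell_succ, Nat.add_sub_cancel, ih n n.lt_succ_self,
        Finset.range_eq_Ico, ← Finset.Ico_add_one_right_eq_Icc,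
        ← Finset.sum_Ico_add' (fun i => κ i * k (n + 1 - i)) 0 (n + 1) 1]
      congr! 2 with i
      rw [Nat.add_sub_add_right, ih (n - i) (by lia)]

open PowerSeries in
theorem mk_eval_freeAppell_succ_eq_mul :
    (mk fun n => (freeAppell κ (n + 1)).eval c) =
      (C c - mk fun n => κ (n + 1)) * mk fun n => (freeAppell κ n).eval c := by
  ext n
  rw [sub_mul, map_sub, coeff_C_mul, coeff_mul, Finset.Nat.sum_antidiagonal_eq_sum_range_succ_mk]
  simp only [coeff_mk, eval_freeAppell_succ]

open PowerSeries in
theorem one_sub_mul_X_mul_mk_eval_freeAppell_succ :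
    (1 - (C c - mk fun n => κ (n + 1)) * X) * (mk fun n => (freeAppell κ (n + 1)).eval c) =
      C c - mk fun n => κ (n + 1) := by
  have hshift := eq_X_mul_shift_add_const (mk fun n => (freeAppell κ n).eval c)
  simp only [coeff_mk, constantCoeff_mk, eval_freeAppell_zero, map_one] at hshift
  have hrec := mk_eval_freeAppell_succ_eq_mul κ c
  rw [hshift] at hrec
  linear_combination hrec

section NilpotentSubstitution

variable {A : Type*} [Ring A] [Algebra R A] {t : ℕ} {a : A}

open PowerSeries in
theorem evalNilpotent_one_sub_mul_X (ha : a ^ t = 0) :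
    evalNilpotent ha (1 - (C c - mk fun n => κ (n + 1)) * X) =
      1 - c • a + (∑ i ∈ Finset.range t, κ (i + 1) • a ^ i) * a := by
  simp only [map_mul, map_sub, map_one, evalNilpotent_X, evalNilpotent_C, evalNilpotent_mk]
  rw [sub_mul, smul_one_mul, sub_add]

theorem isUnit_one_sub_smul_add_sum_mul (ha : a ^ t = 0) :
    IsUnit (1 - c • a + (∑ i ∈ Finset.range t, κ (i + 1) • a ^ i) * a) := by
  rw [← evalNilpotent_one_sub_mul_X κ c ha]
  refine IsUnit.map _ (PowerSeries.isUnit_iff_constantCoeff.2 ?_)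
  simp

theorem one_sub_smul_add_sum_mul_mul_sum_eval_freeAppell (ha : a ^ t = 0) :
    (1 - c • a + (∑ i ∈ Finset.range t, κ (i + 1) • a ^ i) * a) *
        ∑ i ∈ Finset.range t, (freeAppell κ (i + 1)).eval c • a ^ i =
      c • 1 - ∑ i ∈ Finset.range t, κ (i + 1) • a ^ i := by
  rw [← evalNilpotent_one_sub_mul_X κ c ha,
    ← evalNilpotent_mk ha fun i => (freeAppell κ (i + 1)).eval c, ← map_mul,
    one_sub_mul_X_mul_mk_eval_freeAppell_succ, map_sub, evalNilpotent_C, evalNilpotent_mk]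

theorem inv_one_sub_smul_add_sum_mul_mul {ι : Type*} [Fintype ι] [DecidableEq ι]
    {Φ : Matrix ι ι R} (hΦ : Φ ^ t = 0) :
    (1 - c • Φ + (∑ i ∈ Finset.range t, κ (i + 1) • Φ ^ i) * Φ)⁻¹ *
        (c • 1 - ∑ i ∈ Finset.range t, κ (i + 1) • Φ ^ i) =
      ∑ i ∈ Finset.range t, (freeAppell κ (i + 1)).eval c • Φ ^ i := by
  rw [← one_sub_smul_add_sum_mul_mul_sum_eval_freeAppell κ c hΦ,
    Matrix.nonsing_inv_mul_cancel_left _ _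
      ((Matrix.isUnit_iff_isUnit_det _).1 (isUnit_one_sub_smul_add_sum_mul κ c hΦ))]

end NilpotentSubstitution

end FreeAppell

section StrictlyLowerTriangular

open Matrix

variable {ι R : Type*}

theorem isLowerTriangular_sum_smul_pow [LinearOrder ι] [Fintype ι] [CommSemiring R]
    {M : Matrix ι ι R} (hM : M.IsLowerTriangular) (s : Finset ℕ) (u : ℕ → R) :
    (∑ i ∈ s, u i • M ^ i).IsLowerTriangular :=
  sum_mem (S := blockTriangularSubalgebra R R OrderDual.toDual) fun i _ =>
    Subalgebra.smul_mem _ (pow_mem hM i) (u i)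

/-- Matrices vanishing on and above the diagonal. -/
def IsStrictlyLowerTriangular [LE ι] [Zero R] (M : Matrix ι ι R) : Prop :=
  ∀ i j, i ≤ j → M i j = 0

namespace IsStrictlyLowerTriangular

theorem isLowerTriangular [Preorder ι] [Zero R] {M : Matrix ι ι R}
    (hM : IsStrictlyLowerTriangular M) :
    M.IsLowerTriangular :=
  fun i j (hij : i < j) => hM i j hij.le

theorem mul_left [LinearOrder ι] [Fintype ι] [NonUnitalNonAssocSemiring R]
    {M N : Matrix ι ι R} (hN : IsStrictlyLowerTriangular N) (hM : M.IsLowerTriangular) :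
    IsStrictlyLowerTriangular (M * N) := by
  intro i j hij
  rw [mul_apply]
  refine Finset.sum_eq_zero fun k _ => ?_
  rcases lt_or_ge i k with hik | hki
  · rw [hM hik, zero_mul]
  · rw [hN k j (hki.trans hij), mul_zero]

variable [LinearOrder ι] [CommRing R] {M N : Matrix ι ι R}

theorem isLowerTriangular_one_sub (hM : IsStrictlyLowerTriangular M) :
    (1 - M).IsLowerTriangular :=
  blockTriangular_one.sub hM.isLowerTriangular

theorem one_sub_apply_self (hM : IsStrictlyLowerTriangular M) (i : ι) : (1 - M) i i = 1 := by
  rw [Matrix.sub_apply, one_apply_eq, hM i i le_rfl, sub_zero]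

variable [Fintype ι]

theorem smul_one_sub_mul (hM : IsStrictlyLowerTriangular M) (hN : N.IsLowerTriangular) (c : R) :
    IsStrictlyLowerTriangular ((c • 1 - N) * M) := by
  refine hM.mul_left (BlockTriangular.sub ?_ hN)
  rw [smul_one_eq_diagonal]
  exact blockTriangular_diagonal _

theorem pow_card_eq_zero (hM : IsStrictlyLowerTriangular M) : M ^ Fintype.card ι = 0 := by
  have hcharpoly : Mᵀ.charpoly = Polynomial.X ^ Fintype.card ι := by
    rw [charpoly_of_isUpperTriangular Mᵀ fun i j (hij : j < i) => hM j i hij.le]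
    simp [hM _ _ le_rfl]
  rw [charpoly_transpose] at hcharpoly
  simpa [hcharpoly] using aeval_self_charpoly M

end IsStrictlyLowerTriangular

end StrictlyLowerTriangular

section Moments

variable {Ω : Type*} [MeasurableSpace Ω] {μ : Measure Ω} {f : Ω → ℝ}

theorem integrable_polynomial_eval (hf : ∀ n : ℕ, Integrable (fun x => f x ^ n) μ)
    (p : Polynomial ℝ) : Integrable (fun x => p.eval (f x)) μ := by
  simp_rw [Polynomial.eval_eq_sum_range]
  exact integrable_finsetSum _ fun n _ => (hf n).const_mul _

theorem integral_eval_freeAppell_succ [IsProbabilityMeasure μ]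
    (hf : ∀ n : ℕ, Integrable (fun x => f x ^ n) μ) {κ : ℕ → ℝ}
    (hκ : ∀ n, κ (n + 1) = ∫ x, f x * (freeAppell κ n).eval (f x) ∂μ) (n : ℕ) :
    ∫ x, (freeAppell κ (n + 1)).eval (f x) ∂μ = 0 := by
  induction n using Nat.strong_induction_on with
  | _ n ih =>
    have hint_mul : Integrable (fun x => f x * (freeAppell κ n).eval (f x)) μ := by
      have h := integrable_polynomial_eval hf (Polynomial.X * freeAppell κ n)
      simp_rw [Polynomial.eval_mul, Polynomial.eval_X] at h
      exact h
    have hint_term (i : ℕ) :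
        Integrable (fun x => κ (i + 1) * (freeAppell κ (n - i)).eval (f x)) μ :=
      (integrable_polynomial_eval hf _).const_mul _
    have hvanish : ∀ i ∈ Finset.range n,
        ∫ x, κ (i + 1) * (freeAppell κ (n - i)).eval (f x) ∂μ = 0 := by
      intro i hi
      obtain ⟨m, hm⟩ := Nat.exists_eq_add_of_lt (Finset.mem_range.1 hi)
      rw [integral_const_mul, show n - i = m + 1 by lia, ih m (by lia), mul_zero]
    simp_rw [eval_freeAppell_succ]
    rw [integral_sub hint_mul (integrable_finsetSum _ fun i _ => hint_term i), ← hκ,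
      integral_finsetSum _ fun i _ => hint_term i, Finset.sum_range_succ,
      Finset.sum_eq_zero hvanish]
    simp [eval_freeAppell_zero]

theorem integrable_of_continuous_of_compl_compact_null {X F : Type*} [TopologicalSpace X]
    [T2Space X] [MeasurableSpace X] [OpensMeasurableSpace X] [NormedAddCommGroup F] {μ : Measure X}
    [IsFiniteMeasureOnCompacts μ] {K : Set X} (hK : IsCompact K) (hKc : μ Kᶜ = 0) {g : X → F}
    (hg : Continuous g) : Integrable g μ := by
  have hgK : IntegrableOn g K μ := hg.continuousOn.integrableOn_compact hK
  rwa [IntegrableOn, Measure.restrict_eq_self_of_ae_mem hKc] at hgK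

end Moments

theorem stmt18_general {Ω ι : Type*} [MeasurableSpace Ω] [Fintype ι] [LinearOrder ι]
    (μ : Measure Ω) [IsProbabilityMeasure μ]
    (f : Ω → ℝ) (hf : ∀ n : ℕ, Integrable (fun x => f x ^ n) μ)
    (Kf : ℕ → Ω → ℝ) (κ : ℕ → ℝ)
    (hKf0 : ∀ x, Kf 0 x = 1)
    (hκ : ∀ n : ℕ, 1 ≤ n → κ n = ∫ x, f x * Kf (n - 1) x ∂μ)
    (hKfrec : ∀ n : ℕ, 1 ≤ n → ∀ x,
      Kf n x = f x * Kf (n - 1) x - ∑ i ∈ Finset.Icc 1 n, κ i * Kf (n - i) x)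
    (t : ℕ) (Φ : Matrix ι ι ℝ) (hΦ : IsStrictlyLowerTriangular Φ) (hΦt : Φ ^ t = 0)
    (E : Matrix ι ι ℝ) (hE : E = ∑ i ∈ Finset.range t, κ (i + 1) • Φ ^ i) :
    (∀ x,
        (∀ i j, i < j → (1 - f x • Φ + E * Φ) i j = 0) ∧
        (∀ i, (1 - f x • Φ + E * Φ) i i = 1) ∧
        IsUnit (1 - f x • Φ + E * Φ) ∧
        (1 - f x • Φ + E * Φ)⁻¹ * (f x • 1 - E) =
          ∑ i ∈ Finset.range t, Kf (i + 1) x • Φ ^ i) ∧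
    (∀ n : ℕ, 1 ≤ n → ∫ x, Kf n x ∂μ = 0) ∧
    (∀ i j, ∫ x, ((1 - f x • Φ + E * Φ)⁻¹ * (f x • 1 - E)) i j ∂μ = 0) := by
  obtain rfl : Kf = fun n x => (freeAppell κ n).eval (f x) :=
    funext₂ fun n x => eq_eval_freeAppell (hKf0 x) (fun m hm => hKfrec m hm x) n
  have hstrict (x : Ω) : IsStrictlyLowerTriangular ((f x • 1 - E) * Φ) :=
    hΦ.smul_one_sub_mul (hE ▸ isLowerTriangular_sum_smul_pow hΦ.isLowerTriangular _ _) (f x)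
  have hfactor (x : Ω) : 1 - f x • Φ + E * Φ = 1 - (f x • 1 - E) * Φ := by
    rw [sub_mul, smul_one_mul, sub_add]
  have hresolvent (x : Ω) : (1 - f x • Φ + E * Φ)⁻¹ * (f x • 1 - E) =
      ∑ i ∈ Finset.range t, (freeAppell κ (i + 1)).eval (f x) • Φ ^ i :=
    hE ▸ inv_one_sub_smul_add_sum_mul_mul κ (f x) hΦt
  have hintegral (n : ℕ) : ∫ x, (freeAppell κ (n + 1)).eval (f x) ∂μ = 0 :=
    integral_eval_freeAppell_succ hf (fun m => hκ (m + 1) m.succ_pos) n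
  refine ⟨fun x => ⟨fun i j hij => ?_, fun i => ?_,
    hE ▸ isUnit_one_sub_smul_add_sum_mul κ (f x) hΦt, hresolvent x⟩, fun n hn => ?_, fun i j => ?_⟩
  · rw [hfactor]
    exact (hstrict x).isLowerTriangular_one_sub hij
  · rw [hfactor, (hstrict x).one_sub_apply_self]
  · obtain ⟨m, rfl⟩ := Nat.exists_eq_succ_of_ne_zero (Nat.one_le_iff_ne_zero.1 hn)
    exact hintegral m
  · simp_rw [hresolvent, Matrix.sum_apply, Matrix.smul_apply, smul_eq_mul]
    rw [integral_finsetSum _ fun m _ => (integrable_polynomial_eval hf _).mul_const _]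
    exact Finset.sum_eq_zero fun m _ => by rw [integral_mul_const, hintegral, zero_mul]

theorem stmt18 (μ : Measure ℝ) [IsProbabilityMeasure μ]
    (K : Set ℝ) (hK : IsCompact K) (hKc : μ Kᶜ = 0)
    (f : ℝ → ℝ) (hf : Continuous f)
    (Kf : ℕ → ℝ → ℝ) (κ : ℕ → ℝ)
    (hKf0 : ∀ x : ℝ, Kf 0 x = 1)
    (hκ : ∀ n : ℕ, 1 ≤ n → κ n = ∫ x, f x * Kf (n - 1) x ∂μ)
    (hKfrec : ∀ n : ℕ, 1 ≤ n → ∀ x : ℝ,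
      Kf n x = f x * Kf (n - 1) x - ∑ i ∈ Finset.Icc 1 n, κ i * Kf (n - i) x)
    (t : ℕ) (ht : 1 ≤ t)
    (Φ : Matrix (Fin t) (Fin t) ℝ)
    (hΦ : ∀ i j : Fin t, i ≤ j → Φ i j = 0)
    (E : Matrix (Fin t) (Fin t) ℝ)
    (hE : E = ∑ i ∈ Finset.range t, κ (i + 1) • Φ ^ i) :
    (∀ x : ℝ,
        (∀ i j : Fin t, i < j →
          ((1 : Matrix (Fin t) (Fin t) ℝ) - f x • Φ + E * Φ) i j = 0) ∧
        (∀ i : Fin t,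
          ((1 : Matrix (Fin t) (Fin t) ℝ) - f x • Φ + E * Φ) i i = 1) ∧
        IsUnit ((1 : Matrix (Fin t) (Fin t) ℝ) - f x • Φ + E * Φ) ∧
        ((1 : Matrix (Fin t) (Fin t) ℝ) - f x • Φ + E * Φ)⁻¹ *
            (f x • (1 : Matrix (Fin t) (Fin t) ℝ) - E) =
          ∑ i ∈ Finset.range t, Kf (i + 1) x • Φ ^ i) ∧
    (∀ n : ℕ, 1 ≤ n → (∫ x, Kf n x ∂μ) = 0) ∧
    (∀ i j : Fin t,
        (∫ x, (((1 : Matrix (Fin t) (Fin t) ℝ) - f x • Φ + E * Φ)⁻¹ *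
            (f x • (1 : Matrix (Fin t) (Fin t) ℝ) - E)) i j ∂μ) = 0) := by
  exact stmt18_general μ f
    (fun n => integrable_of_continuous_of_compl_compact_null hK hKc (hf.pow n))
    Kf κ hKf0 hκ hKfrec t Φ hΦ
    (by simpa using IsStrictlyLowerTriangular.pow_card_eq_zero hΦ) E hE
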